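/- arXiv:0901.2864 — 7 statements merged into one kernel-verified Lean document; each statement's English description precedes it below -/
import Mathlib

section
/- Let C = D − G. If the code C_L(D,G) is nonzero, then its minimum distance satisfies d(C_L(D,G)) = min{ deg A : 0 ≤ A ≤ D and L(A−C) ≠ L(−C) }. -/
/-!
For `A` with `0 ≤ A ≤ D`, the space `L(A - C) = L(G - (D - A))` consists of the `f ∈ L(G)` that
vanish at the points of `D - A`, and `L(-C) = L(G - D)` is the kernel of evaluation on `L(G)`.
Both inequalities follow from this.

* A nonzero codeword `c = ev f` has support divisor `A`, of degree `wt c`, and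
  `f ∈ L(A - C) \ L(-C)` (`mem_Lset_sumPt`, `not_mem_Lset_neg`).
* Conversely a function in `L(A - C) \ L(-C)` gives a nonzero codeword whose support divisor is
  at most `A` (`exists_codeword_of_Lset_ne`), so its weight is at most `deg A`.
-/

open scoped Classical

noncomputable section

/-- Abstract data of (the function field of) a smooth, projective, absolutely
irreducible algebraic curve over a finite field `F`.  The structure records the
closed points with their degrees, the genus, the function field together with the
order (valuation) of a function at each closed point, the divisor and the degree
of a principal divisor, evaluation of functions at rational points, the
one-dimensional module of rational differentials with divisors and residues,
finite dimensionality of Riemann-Roch spaces and the Riemann-Roch theorem. -/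
structure AGCurve where
  /-- the (finite) base field -/
  F : Type
  [fieldF : Field F]
  [finF : Fintype F]
  /-- the closed points of the curve -/
  Pt : Type
  /-- the degree of a closed point -/
  ptDeg : Pt → ℤ
  ptDeg_pos : ∀ P, 0 < ptDeg P
  /-- the genus -/
  g : ℕ
  /-- the function field -/
  FF : Type
  [fieldFF : Field FF]
  [algFF : Algebra F FF]
  /-- the order of vanishing of a function at a closed point -/
  ord : Pt → FF → ℤ
  ord_zero : ∀ P, ord P (0 : FF) = 0
  ord_mul : ∀ (P : Pt) (f h : FF), f ≠ 0 → h ≠ 0 → ord P (f * h) = ord P f + ord P h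
  ord_add_min : ∀ (P : Pt) (f h : FF), f ≠ 0 → h ≠ 0 → f + h ≠ 0 →
    min (ord P f) (ord P h) ≤ ord P (f + h)
  ord_algebraMap : ∀ (P : Pt) (a : F), a ≠ 0 → ord P (algebraMap F FF a) = 0
  /-- the divisor of a (nonzero) function -/
  divOf : FF → (Pt →₀ ℤ)
  divOf_apply : ∀ (f : FF), f ≠ 0 → ∀ P, divOf f P = ord P f
  divOf_deg : ∀ (f : FF), f ≠ 0 → ((divOf f).sum fun P n => n * ptDeg P) = 0
  /-- evaluation of a function at a rational point (junk value at a pole) -/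
  ev : Pt → FF → F
  ev_zero : ∀ P : Pt, ev P (0 : FF) = 0
  ev_add : ∀ (P : Pt) (f h : FF), (0 ≤ ord P f ∨ f = 0) → (0 ≤ ord P h ∨ h = 0) →
    ev P (f + h) = ev P f + ev P h
  ev_smul : ∀ (P : Pt) (a : F) (f : FF), (0 ≤ ord P f ∨ f = 0) →
    ev P (a • f) = a * ev P f
  ev_eq_zero_iff : ∀ (P : Pt) (f : FF), ptDeg P = 1 → f ≠ 0 → 0 ≤ ord P f →
    (ev P f = 0 ↔ 0 < ord P f)
  /-- the module of rational differentials of the curve -/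
  W : Type
  [addW : AddCommGroup W]
  [modW : Module FF W]
  [nontrivW : Nontrivial W]
  rank_W : Module.rank FF W = 1
  /-- the divisor of a (nonzero) rational differential -/
  divω : W → (Pt →₀ ℤ)
  divω_smul : ∀ (f : FF) (ω : W), f ≠ 0 → ω ≠ 0 → divω (f • ω) = divOf f + divω ω
  /-- the residue of a rational differential at a rational point -/
  res : Pt → W → F
  res_zero : ∀ P : Pt, res P (0 : W) = 0
  res_add : ∀ (P : Pt) (ω η : W), res P (ω + η) = res P ω + res P η
  res_smul : ∀ (P : Pt) (a : F) (ω : W), res P ((algebraMap F FF a) • ω) = a * res P ω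
  res_eq_zero_of_nonneg : ∀ (P : Pt) (ω : W), ω ≠ 0 → 0 ≤ divω ω P → res P ω = 0
  /-- Riemann-Roch spaces are finite dimensional -/
  L_findim : ∀ D : Pt →₀ ℤ,
    Module.Finite F (Submodule.span F {f : FF | f = 0 ∨ ∀ P, -(D P) ≤ ord P f})
  /-- the Riemann-Roch theorem: `l(D) - l(K - D) = deg D + 1 - g` where `K` is the
  divisor of any nonzero rational differential -/
  riemannRoch : ∀ (D : Pt →₀ ℤ) (ω : W), ω ≠ 0 →
    (Module.finrank F (Submodule.span F {f : FF | f = 0 ∨ ∀ P, -(D P) ≤ ord P f}) : ℤ) -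
      (Module.finrank F (Submodule.span F
        {f : FF | f = 0 ∨ ∀ P, -((divω ω - D) P) ≤ ord P f}) : ℤ) =
      (D.sum fun P n => n * ptDeg P) + 1 - g

attribute [instance] AGCurve.fieldF AGCurve.finF AGCurve.fieldFF AGCurve.algFF
  AGCurve.addW AGCurve.modW AGCurve.nontrivW

namespace AGCurve

variable (X : AGCurve)

/-- divisors on the curve -/
abbrev Div := X.Pt →₀ ℤ

/-- the degree of a divisor -/
def deg (D : X.Div) : ℤ := D.sum fun P n => n * X.ptDeg P

/-- a rational point is a closed point of degree one -/
def IsRational (P : X.Pt) : Prop := X.ptDeg P = 1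

/-- a point regarded as a divisor -/
def pt (P : X.Pt) : X.Div := Finsupp.single P 1

/-- the Riemann-Roch space `L(D)`, as a subset of the function field:
`0` together with the nonzero functions `f` with `(f) + D ≥ 0` -/
def Lset (D : X.Div) : Set X.FF := {f | f = 0 ∨ ∀ P, -(D P) ≤ X.ord P f}

/-- the Riemann-Roch space `L(D)` as an `F`-subspace of the function field -/
def Lsub (D : X.Div) : Submodule X.F X.FF := Submodule.span X.F (X.Lset D)

/-- `l(D)`, the dimension of `L(D)` -/
def l (D : X.Div) : ℕ := Module.finrank X.F (X.Lsub D)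

theorem Lset_mono {D D' : X.Div} (h : D ≤ D') : X.Lset D ⊆ X.Lset D' := by
  intro f hf
  rcases hf with hf | hf
  · exact Or.inl hf
  · refine Or.inr fun P => le_trans ?_ (hf P)
    have : D P ≤ D' P := h P
    omega

theorem Lsub_mono {D D' : X.Div} (h : D ≤ D') : X.Lsub D ≤ X.Lsub D' :=
  Submodule.span_mono (X.Lset_mono h)

/-- the space `Ω(E)` of rational differentials `ω` with `(ω) ≥ E`, together with `0` -/
def Omega (E : X.Div) : Set X.W := {ω | ω = 0 ∨ ∀ P, E P ≤ X.divω ω P}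

/-- a canonical divisor is the divisor of a nonzero rational differential -/
def IsCanonical (Kd : X.Div) : Prop := ∃ ω : X.W, ω ≠ 0 ∧ Kd = X.divω ω

/-- the evaluation (geometric Goppa) code `C_L(D, G)`, the image of `L(G)` under
`f ↦ (f(P₁), …, f(Pₙ))` -/
def evCode (n : ℕ) (Pts : Fin n → X.Pt) (G : X.Div) : Set (Fin n → X.F) :=
  (fun f i => X.ev (Pts i) f) '' X.Lset G

/-- the residue (geometric Goppa) code `C_Ω(D, G)`, the image of `Ω(G - D)` under
`ω ↦ (Res_{P₁}(ω), …, Res_{Pₙ}(ω))` -/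
def resCode (n : ℕ) (Pts : Fin n → X.Pt) (Dv G : X.Div) : Set (Fin n → X.F) :=
  (fun ω i => X.res (Pts i) ω) '' X.Omega (G - Dv)

/-- the Hamming weight of a word -/
def wt {n : ℕ} {α : Type*} [Zero α] (c : Fin n → α) : ℕ :=
  (Finset.univ.filter fun i => c i ≠ 0).card

/-- the minimum distance (minimum weight of a nonzero codeword) of a code -/
def minDist {n : ℕ} {α : Type*} [Zero α] (Code : Set (Fin n → α)) : ℕ :=
  sInf {w | ∃ c ∈ Code, c ≠ 0 ∧ wt c = w}

/-- the support of a word `c`, regarded as a subdivisor of `D = P₁ + ⋯ + Pₙ` -/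
def suppDiv {n : ℕ} (Pts : Fin n → X.Pt) (c : Fin n → X.F) : X.Div :=
  ∑ i ∈ Finset.univ.filter (fun i => c i ≠ 0), X.pt (Pts i)

/-- `Γ(C) = {A : L(A) ≠ 0 and L(A - C) ≠ 0}` -/
def Gamma (C : X.Div) : Set X.Div :=
  {A | X.Lset A ≠ {0} ∧ X.Lset (A - C) ≠ {0}}

/-- `Γ*(C) = {A : L(A) ≠ 0 and L(A - C) ≠ L(-C)}` -/
def GammaStar (C : X.Div) : Set X.Div :=
  {A | X.Lset A ≠ {0} ∧ X.Lset (A - C) ≠ X.Lset (-C)}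

/-- `Γ_P = {A : L(A) ≠ L(A - P)}` -/
def GammaP (P : X.Pt) : Set X.Div :=
  {A | X.Lset A ≠ X.Lset (A - X.pt P)}

/-- `Γ_P(C) = {A : L(A) ≠ L(A - P) and L(A - C) ≠ L(A - C - P)}` -/
def GammaPC (P : X.Pt) (C : X.Div) : Set X.Div :=
  {A | X.Lset A ≠ X.Lset (A - X.pt P) ∧ X.Lset (A - C) ≠ X.Lset (A - C - X.pt P)}

/-- `Δ_P(C) = {A : L(A) ≠ L(A - P) and L(A - C) = L(A - C - P)}` -/
def DeltaPC (P : X.Pt) (C : X.Div) : Set X.Div :=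
  {A | X.Lset A ≠ X.Lset (A - X.pt P) ∧ X.Lset (A - C) = X.Lset (A - C - X.pt P)}

/-- `Γ_S = ∩_{P ∈ S} Γ_P` -/
def GammaS (S : Finset X.Pt) : Set X.Div := ⋂ P ∈ S, X.GammaP P

/-- `Γ_S(C) = ∩_{P ∈ S} Γ_P(C)` -/
def GammaSC (S : Finset X.Pt) (C : X.Div) : Set X.Div := ⋂ P ∈ S, X.GammaPC P C

/-- `Δ_S(C) = ∪_{P ∈ S} Δ_P(C)` -/
def DeltaSC (S : Finset X.Pt) (C : X.Div) : Set X.Div := ⋃ P ∈ S, X.DeltaPC P C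

end AGCurve

namespace AGCurve

theorem deg_mono (X : AGCurve) {A B : X.Div} (h : A ≤ B) : X.deg A ≤ X.deg B := by
  have hsub : X.deg (B - A) = X.deg B - X.deg A :=
    Finsupp.sum_sub_index fun P b₁ b₂ => sub_mul b₁ b₂ (X.ptDeg P)
  have hnonneg : 0 ≤ X.deg (B - A) := by
    refine Finset.sum_nonneg fun P _ => mul_nonneg ?_ (X.ptDeg_pos P).le
    have := h P
    simp only [Finsupp.sub_apply]
    omega
  omega

/-- The divisor `∑_{i ∈ s} P_i`. -/
def sumPt (X : AGCurve) {n : ℕ} (Pts : Fin n → X.Pt) (s : Finset (Fin n)) : X.Div :=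
  ∑ i ∈ s, X.pt (Pts i)

section

variable {X : AGCurve} {n : ℕ} {Pts : Fin n → X.Pt}

theorem sumPt_apply_Pts (hinj : Function.Injective Pts) (s : Finset (Fin n)) (j : Fin n) :
    X.sumPt Pts s (Pts j) = if j ∈ s then 1 else 0 := by
  simp [sumPt, pt, Finsupp.finsetSum_apply, Finsupp.single_apply, hinj.eq_iff]

theorem sumPt_apply_of_notMem (s : Finset (Fin n)) {P : X.Pt} (hP : ∀ i, Pts i ≠ P) :
    X.sumPt Pts s P = 0 := by
  simp [sumPt, pt, Finsupp.finsetSum_apply, hP]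

theorem sumPt_nonneg (s : Finset (Fin n)) : 0 ≤ X.sumPt Pts s :=
  Finset.sum_nonneg fun _ _ => Finsupp.single_nonneg.2 zero_le_one

theorem sumPt_le_univ (s : Finset (Fin n)) : X.sumPt Pts s ≤ X.sumPt Pts Finset.univ :=
  Finset.sum_le_sum_of_subset_of_nonneg (Finset.subset_univ s)
    fun _ _ _ => Finsupp.single_nonneg.2 zero_le_one

theorem deg_sumPt (hrat : ∀ i, X.IsRational (Pts i)) (s : Finset (Fin n)) :
    X.deg (X.sumPt Pts s) = s.card := by
  have hsum : X.deg (X.sumPt Pts s) = ∑ i ∈ s, X.deg (X.pt (Pts i)) :=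
    (Finsupp.sum_finsetSum_index (fun P => zero_mul (X.ptDeg P))
      (fun P b₁ b₂ => add_mul b₁ b₂ (X.ptDeg P))).symm
  have hpt : ∀ i, X.deg (X.pt (Pts i)) = 1 := fun i => by
    have := hrat i
    simp_all [deg, pt, IsRational]
  simp [hsum, hpt]

theorem ev_eq_zero_iff_of_mem {G : X.Div} (hrat : ∀ i, X.IsRational (Pts i))
    (hGD : ∀ i, G (Pts i) = 0) {f : X.FF} (hf0 : f ≠ 0) (hf : ∀ P, -(G P) ≤ X.ord P f)
    (i : Fin n) : X.ev (Pts i) f = 0 ↔ 0 < X.ord (Pts i) f := by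
  refine X.ev_eq_zero_iff _ f (hrat i) hf0 ?_
  have := hf (Pts i)
  rw [hGD] at this
  omega

/-- A nonzero function in `L(G)` lies in `L(A - C)`, where `A` is the support divisor of its codeword. -/
theorem mem_Lset_sumPt {G : X.Div} (hinj : Function.Injective Pts)
    (hrat : ∀ i, X.IsRational (Pts i)) (hGD : ∀ i, G (Pts i) = 0) {f : X.FF}
    (hf0 : f ≠ 0) (hf : ∀ P, -(G P) ≤ X.ord P f) :
    f ∈ X.Lset (X.sumPt Pts (Finset.univ.filter fun i => X.ev (Pts i) f ≠ 0) -
      (X.sumPt Pts Finset.univ - G)) := by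
  refine Or.inr fun P => ?_
  have hP := hf P
  by_cases h : ∃ i, Pts i = P
  · obtain ⟨i, rfl⟩ := h
    have hev := ev_eq_zero_iff_of_mem hrat hGD hf0 hf i
    simp only [Finsupp.sub_apply, sumPt_apply_Pts hinj, Finset.mem_filter, Finset.mem_univ,
      true_and, if_true, hGD] at hP ⊢
    split_ifs with h0
    · omega
    · have := hev.1 (not_not.1 h0)
      omega
  · push Not at h
    simp only [Finsupp.sub_apply, sumPt_apply_of_notMem _ h]
    omega

/-- A function in `L(G)` with nonzero value at some `P_i` is not in `L(-C)`. -/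
theorem not_mem_Lset_neg {G : X.Div} (hinj : Function.Injective Pts)
    (hrat : ∀ i, X.IsRational (Pts i)) (hGD : ∀ i, G (Pts i) = 0) {f : X.FF}
    (hf0 : f ≠ 0) (hf : ∀ P, -(G P) ≤ X.ord P f) {i : Fin n} (hi : X.ev (Pts i) f ≠ 0) :
    f ∉ X.Lset (-(X.sumPt Pts Finset.univ - G)) := by
  rintro (h | h)
  · exact hf0 h
  · have hP := h (Pts i)
    simp only [Finsupp.neg_apply, Finsupp.sub_apply, sumPt_apply_Pts hinj, Finset.mem_univ,
      if_true, hGD] at hP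
    exact hi ((ev_eq_zero_iff_of_mem hrat hGD hf0 hf i).2 (by omega))

/-- If `0 ≤ A ≤ D` and `L(A - C) ≠ L(-C)`, some nonzero codeword has support divisor at most `A`,
and hence weight at most `deg A`. -/
theorem exists_codeword_of_Lset_ne {G A : X.Div} (hinj : Function.Injective Pts)
    (hrat : ∀ i, X.IsRational (Pts i)) (hGD : ∀ i, G (Pts i) = 0)
    (hA0 : 0 ≤ A) (hAD : A ≤ X.sumPt Pts Finset.univ)
    (hne : X.Lset (A - (X.sumPt Pts Finset.univ - G)) ≠
      X.Lset (-(X.sumPt Pts Finset.univ - G))) :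
    ∃ c ∈ X.evCode n Pts G, c ≠ 0 ∧ (wt c : ℤ) ≤ X.deg A := by
  have hsub : X.Lset (-(X.sumPt Pts Finset.univ - G)) ⊆
      X.Lset (A - (X.sumPt Pts Finset.univ - G)) := by
    refine X.Lset_mono ?_
    rw [sub_eq_add_neg]
    exact le_add_of_nonneg_left hA0
  obtain ⟨f, hfA, hfC⟩ := Set.exists_of_ssubset (hsub.ssubset_of_ne hne.symm)
  have hf0 : f ≠ 0 := fun h => hfC (Or.inl h)
  have hfA' := hfA.resolve_left hf0
  have hf : ∀ P, -(G P) ≤ X.ord P f := fun P => by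
    have h1 := hfA' P
    have h2 := hAD P
    simp only [Finsupp.sub_apply] at h1
    omega
  refine ⟨fun i => X.ev (Pts i) f, ⟨f, Or.inr hf, rfl⟩, ?_, ?_⟩
  · intro hc
    refine hfC (Or.inr fun P => ?_)
    by_cases h : ∃ i, Pts i = P
    · obtain ⟨i, rfl⟩ := h
      have := (ev_eq_zero_iff_of_mem hrat hGD hf0 hf i).1 (congrFun hc i)
      simp only [Finsupp.neg_apply, Finsupp.sub_apply, sumPt_apply_Pts hinj, Finset.mem_univ,
        if_true, hGD]
      omega
    · push Not at h
      have := hf P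
      simp only [Finsupp.neg_apply, Finsupp.sub_apply, sumPt_apply_of_notMem _ h]
      omega
  · rw [wt, ← deg_sumPt hrat]
    refine X.deg_mono fun P => ?_
    by_cases h : ∃ i, Pts i = P
    · obtain ⟨i, rfl⟩ := h
      have hev := ev_eq_zero_iff_of_mem hrat hGD hf0 hf i
      have h1 := hfA' (Pts i)
      have h2 := hA0 (Pts i)
      simp only [Finsupp.sub_apply, sumPt_apply_Pts hinj, Finset.mem_univ, if_true, hGD,
        Finsupp.coe_zero, Pi.zero_apply, Finset.mem_filter, true_and] at h1 h2 ⊢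
      split_ifs with h0
      · have := mt hev.2 h0
        omega
      · exact h2
    · push Not at h
      rw [sumPt_apply_of_notMem _ h]
      exact hA0 P

end

end AGCurve

/-- Let `C = D - G`.  If the code `C_L(D, G)` is nonzero, then its
minimum distance satisfies
`d(C_L(D,G)) = min { deg A : 0 ≤ A ≤ D and L(A - C) ≠ L(-C) }`. -/
theorem minDist_evCode_eq (X : AGCurve) (n : ℕ) (Pts : Fin n → X.Pt)
    (hinj : Function.Injective Pts) (hrat : ∀ i, X.IsRational (Pts i))
    (G : X.Div) (hGD : ∀ i, G (Pts i) = 0)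
    (Ddiv : X.Div) (hDdiv : Ddiv = ∑ i, X.pt (Pts i))
    (C : X.Div) (hC : C = Ddiv - G)
    (hnz : ∃ c ∈ X.evCode n Pts G, c ≠ 0) :
    AGCurve.minDist (X.evCode n Pts G) =
      sInf {w : ℕ | ∃ A : X.Div, 0 ≤ A ∧ A ≤ Ddiv ∧
        X.Lset (A - C) ≠ X.Lset (-C) ∧ X.deg A = (w : ℤ)} := by
  subst hC
  obtain rfl : Ddiv = X.sumPt Pts Finset.univ := hDdiv
  -- The support divisor of a nonzero codeword witnesses its weight in the set on the right.
  have key : ∀ c ∈ X.evCode n Pts G, c ≠ 0 →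
      AGCurve.wt c ∈ {w : ℕ | ∃ A : X.Div, 0 ≤ A ∧ A ≤ X.sumPt Pts Finset.univ ∧
        X.Lset (A - (X.sumPt Pts Finset.univ - G)) ≠
          X.Lset (-(X.sumPt Pts Finset.univ - G)) ∧ X.deg A = (w : ℤ)} := by
    rintro _ ⟨f, hfG, rfl⟩ hc
    obtain ⟨i, hi⟩ := Function.ne_iff.1 hc
    have hi' : X.ev (Pts i) f ≠ 0 := hi
    have hf0 : f ≠ 0 := by
      rintro rfl
      exact hi' (X.ev_zero _)
    have hf := hfG.resolve_left hf0
    refine ⟨X.sumPt Pts (Finset.univ.filter fun i => X.ev (Pts i) f ≠ 0),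
      AGCurve.sumPt_nonneg _, AGCurve.sumPt_le_univ _, fun h => ?_, AGCurve.deg_sumPt hrat _⟩
    exact AGCurve.not_mem_Lset_neg hinj hrat hGD hf0 hf hi'
      (h ▸ AGCurve.mem_Lset_sumPt hinj hrat hGD hf0 hf)
  obtain ⟨c₀, hc₀, hc₀'⟩ := hnz
  apply le_antisymm
  · refine le_csInf ⟨_, key c₀ hc₀ hc₀'⟩ ?_
    rintro w ⟨A, hA0, hAD, hne, hdeg⟩
    obtain ⟨c, hc, hc', hle⟩ := AGCurve.exists_codeword_of_Lset_ne hinj hrat hGD hA0 hAD hne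
    have hmin : AGCurve.minDist (X.evCode n Pts G) ≤ AGCurve.wt c :=
      Nat.sInf_le ⟨c, hc, hc', rfl⟩
    omega
  · refine le_csInf ⟨_, c₀, hc₀, hc₀', rfl⟩ ?_
    rintro _ ⟨c, hc, hc', rfl⟩
    exact Nat.sInf_le (key c hc hc')
end
end

section
/- Let P be a rational point not in the support of D, and let C = D − G. If c ∈ C_L(D,G) \ C_L(D,G−P) and A = supp(c) (regarded as a subdivisor of D), then L(A−C) ≠ L(A−C−P). -/
/-!
Write `c` as the evaluation vector of some `f ∈ L(G)`.  Then `f ∉ L(G - P)`, since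
`c ∉ C_L(D, G - P)`.  The function `f` vanishes at the points of `D` outside `supp(c) = A`, so
`f ∈ L(G - (D - A)) = L(A - C)`.  As `A ≤ D`, we have `A - C - P ≤ G - P`, so
`L(A - C - P) ⊆ L(G - P)` does not contain `f`.
-/

open scoped Classical

noncomputable section

namespace AGCurve

theorem sum_pt_apply (X : AGCurve) {n : ℕ} {Pts : Fin n → X.Pt}
    (hinj : Function.Injective Pts) (S : Finset (Fin n)) (i : Fin n) :
    (∑ j ∈ S, X.pt (Pts j)) (Pts i) = if i ∈ S then 1 else 0 := by
  simp [Finsupp.finsetSum_apply, pt, Finsupp.single_apply, hinj.eq_iff]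

theorem sum_pt_apply_of_ne (X : AGCurve) {n : ℕ} {Pts : Fin n → X.Pt}
    (S : Finset (Fin n)) {Q : X.Pt} (hQ : ∀ i, Pts i ≠ Q) :
    (∑ j ∈ S, X.pt (Pts j)) Q = 0 := by
  simp [Finsupp.finsetSum_apply, pt, hQ]

theorem suppDiv_le (X : AGCurve) {n : ℕ} (Pts : Fin n → X.Pt) (c : Fin n → X.F) :
    X.suppDiv Pts c ≤ ∑ i, X.pt (Pts i) := by
  refine Finset.sum_le_sum_of_subset_of_nonneg (Finset.filter_subset _ _) fun i _ _ => ?_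
  exact Finsupp.single_nonneg.2 zero_le_one

end AGCurve

/-- Let `P` be a rational point not in the support of `D` and let
`C = D - G`.  If `c ∈ C_L(D,G) \ C_L(D,G-P)` and `A = supp(c)`, then
`L(A - C) ≠ L(A - C - P)`. -/
theorem evCode_coset_support (X : AGCurve) (n : ℕ) (Pts : Fin n → X.Pt)
    (hinj : Function.Injective Pts) (hrat : ∀ i, X.IsRational (Pts i))
    (G : X.Div) (hGD : ∀ i, G (Pts i) = 0)
    (Ddiv : X.Div) (hDdiv : Ddiv = ∑ i, X.pt (Pts i))
    (P : X.Pt) (hPrat : X.IsRational P) (hP : ∀ i, Pts i ≠ P)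
    (C : X.Div) (hC : C = Ddiv - G)
    (c : Fin n → X.F) (hc : c ∈ X.evCode n Pts G)
    (hc' : c ∉ X.evCode n Pts (G - X.pt P))
    (A : X.Div) (hA : A = X.suppDiv Pts c) :
    X.Lset (A - C) ≠ X.Lset (A - C - X.pt P) := by
  obtain ⟨f, hf, rfl⟩ := hc
  have hfP : f ∉ X.Lset (G - X.pt P) := fun h => hc' ⟨f, h, rfl⟩
  have hf0 : f ≠ 0 := fun h => hfP (Or.inl h)
  have hord : ∀ Q, -(G Q) ≤ X.ord Q f := hf.resolve_left hf0
  subst hA hC hDdiv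
  intro heq
  have hmem : f ∈ X.Lset (X.suppDiv Pts (fun i => X.ev (Pts i) f) -
      (∑ i, X.pt (Pts i) - G)) := by
    refine Or.inr fun Q => ?_
    have hQ := hord Q
    rw [Finsupp.sub_apply, Finsupp.sub_apply, AGCurve.suppDiv]
    by_cases h : ∃ i, Pts i = Q
    · obtain ⟨i, rfl⟩ := h
      rw [X.sum_pt_apply hinj, X.sum_pt_apply hinj]
      rw [hGD i, neg_zero] at hQ
      have hev := X.ev_eq_zero_iff (Pts i) f (hrat i) hf0 hQ
      by_cases hi : X.ev (Pts i) f = 0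
      -- A zero coordinate of `c` gives a zero of `f`, which accounts for the `-1` from `D`.
      · have := hev.1 hi
        simp [hi, hGD i]
        omega
      · simpa [hi, hGD i] using hQ
    · push Not at h
      rw [X.sum_pt_apply_of_ne _ h, X.sum_pt_apply_of_ne _ h]
      simpa using hQ
  rw [heq] at hmem
  refine hfP (X.Lset_mono (fun Q => ?_) hmem)
  have hle := X.suppDiv_le Pts (fun i => X.ev (Pts i) f) Q
  simp only [Finsupp.sub_apply]
  linarith
end
end

section
/- Let C be a divisor and P a rational point. If D' ∈ Γ_P(C), then Δ_P(C) ⊆ Δ_P(D'). -/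
/-! The set `Γ_P` of divisors `A` with `L(A) ≠ L(A - P)` is a semigroup
(`AGCurve.Lset_ne_add`): membership means that some nonzero `f ∈ L(A)` has order exactly
`-A(P)` at `P`, and such functions multiply. Let `A ∈ Δ_P(C)` and `D' ∈ Γ_P(C)`. If
`A - D'` were in `Γ_P`, then `A - C = (A - D') + (D' - C)` would be in `Γ_P` as well,
contradicting `A ∈ Δ_P(C)`. -/

open scoped Classical

noncomputable section

/-- `L(A) ≠ L(A - P)` holds exactly when some nonzero function of `L(A)` attains the
extremal order `-A(P)` at `P`. -/
theorem AGCurve.Lset_ne_iff (X : AGCurve) (P : X.Pt) (A : X.Div) :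
    X.Lset A ≠ X.Lset (A - X.pt P) ↔
      ∃ f : X.FF, f ≠ 0 ∧ (∀ Q, -(A Q) ≤ X.ord Q f) ∧ X.ord P f = -(A P) := by
  have hle : A - X.pt P ≤ A := by
    intro Q
    by_cases hQ : P = Q <;> simp [AGCurve.pt, Finsupp.single_apply, hQ]
  constructor
  · intro hne
    have hnot : ¬ X.Lset A ⊆ X.Lset (A - X.pt P) := fun h =>
      hne (Set.Subset.antisymm h (X.Lset_mono hle))
    obtain ⟨f, hf, hf'⟩ := Set.not_subset.mp hnot
    have hf0 : f ≠ 0 := fun h => hf' (Or.inl h)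
    have hfA : ∀ Q, -(A Q) ≤ X.ord Q f := hf.resolve_left hf0
    refine ⟨f, hf0, hfA, ?_⟩
    by_contra hord
    refine hf' (Or.inr fun Q => ?_)
    have hQA := hfA Q
    by_cases hQ : P = Q
    · subst hQ
      simp only [AGCurve.pt, Finsupp.sub_apply, Finsupp.single_eq_same]
      omega
    · simpa [AGCurve.pt, Finsupp.single_apply, hQ] using hQA
  · rintro ⟨f, hf0, hfA, hord⟩ heq
    have hmem : f ∈ X.Lset (A - X.pt P) := heq ▸ (Or.inr hfA : f ∈ X.Lset A)
    have hP := hmem.resolve_left hf0 P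
    simp only [AGCurve.pt, Finsupp.sub_apply, Finsupp.single_eq_same] at hP
    omega

/-- `Γ_P` is closed under addition: a product of functions of extremal order at `P`
has extremal order at `P`. -/
theorem AGCurve.Lset_ne_add (X : AGCurve) (P : X.Pt) {A B : X.Div}
    (hA : X.Lset A ≠ X.Lset (A - X.pt P)) (hB : X.Lset B ≠ X.Lset (B - X.pt P)) :
    X.Lset (A + B) ≠ X.Lset (A + B - X.pt P) := by
  rw [X.Lset_ne_iff] at hA hB ⊢
  obtain ⟨f, hf0, hfA, hf⟩ := hA
  obtain ⟨h, hh0, hhB, hh⟩ := hB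
  refine ⟨f * h, mul_ne_zero hf0 hh0, fun Q => ?_, ?_⟩
  · have h1 := hfA Q
    have h2 := hhB Q
    rw [X.ord_mul Q f h hf0 hh0, Finsupp.add_apply]
    omega
  · rw [X.ord_mul P f h hf0 hh0, Finsupp.add_apply]
    omega

/-- Let `C` be a divisor and `P` a rational point.
If `D' ∈ Γ_P(C)`, then `Δ_P(C) ⊆ Δ_P(D')`. -/
theorem deltaPC_subset (X : AGCurve) (C : X.Div) (P : X.Pt)
    (hPrat : X.IsRational P) (D' : X.Div) (hD' : D' ∈ X.GammaPC P C) :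
    X.DeltaPC P C ⊆ X.DeltaPC P D' := by
  rintro A ⟨hA, hAC⟩
  refine ⟨hA, ?_⟩
  by_contra hne
  have hsum := X.Lset_ne_add P hne hD'.2
  rw [sub_add_sub_cancel] at hsum
  exact hsum hAC
end
end

section
/- Let B be a divisor and let P, Q be distinct rational points. There exists a unique integer k(B,P,Q) such that B + k'P ∈ Γ_Q if and only if k' ≥ k(B,P,Q); in particular, B + kP ∈ Γ_Q implies B + (k+1)P ∈ Γ_Q. -/
/-!
Membership `A ∈ Γ_Q` means that some nonzero `f ∈ L(A)` has `ord_Q f = -A(Q)` exactly.  Since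
`P ≠ Q`, such an `f` for `B + kP` also serves `B + (k+1)P`, so the set of `k` with
`B + kP ∈ Γ_Q` is closed upwards (`mem_GammaP_iff`, `mem_GammaP_of_le`).

It is bounded below because `L(A) = 0` when `deg A < 0` (`Lset_eq_zero`), so that no divisor of
negative degree lies in `Γ_Q`.  It is nonempty because for `deg A > deg K + 1`, with `K` canonical,
Riemann-Roch gives `l(A) - l(A - Q) = deg Q > 0` (`mem_GammaP_of_deg`).  A nonempty, bounded below,
upward closed set of integers is `{k' | k0 ≤ k'}` for exactly one `k0`.
-/

open scoped Classical

noncomputable section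

namespace AGCurve

variable (X : AGCurve)

theorem deg_add (D E : X.Div) : X.deg (D + E) = X.deg D + X.deg E :=
  Finsupp.sum_add_index' (by simp) (by intros; ring)

theorem deg_zsmul_pt (k : ℤ) (P : X.Pt) : X.deg (k • X.pt P) = k * X.ptDeg P := by
  simp [deg, pt]

theorem deg_pt (P : X.Pt) : X.deg (X.pt P) = X.ptDeg P := by
  simp [deg, pt]

theorem deg_sub (D E : X.Div) : X.deg (D - E) = X.deg D - X.deg E := by
  have h := X.deg_add (D - E) E
  rw [sub_add_cancel] at h
  omega

theorem deg_nonneg {D : X.Div} (h : 0 ≤ D) : 0 ≤ X.deg D :=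
  Finset.sum_nonneg fun P _ => mul_nonneg (h P) (X.ptDeg_pos P).le

/-- A nonzero `f ∈ L(D)` makes `(f) + D` effective of degree `deg D`, as principal divisors have
degree `0`. -/
theorem Lset_eq_zero {D : X.Div} (h : X.deg D < 0) : X.Lset D = {0} := by
  ext f
  refine ⟨fun hf => ?_, fun hf => Or.inl hf⟩
  by_contra hf0
  have hf0 : f ≠ 0 := hf0
  have hord := hf.resolve_left hf0
  have hnn : 0 ≤ X.deg (X.divOf f + D) := by
    refine X.deg_nonneg fun P => ?_
    have := hord P
    simp only [Finsupp.coe_zero, Pi.zero_apply, Finsupp.add_apply, X.divOf_apply f hf0 P]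
    omega
  have hz : X.deg (X.divOf f) = 0 := X.divOf_deg f hf0
  rw [X.deg_add, hz] at hnn
  omega

theorem l_eq_zero {D : X.Div} (h : X.deg D < 0) : X.l D = 0 := by
  have hbot : X.Lsub D = ⊥ := by
    rw [Lsub, X.Lset_eq_zero h, Submodule.span_singleton_eq_bot]
  rw [l, hbot, finrank_bot]

/-- `A ∈ Γ_Q` iff some nonzero function in `L(A)` attains the largest pole order allowed at `Q`. -/
theorem mem_GammaP_iff (A : X.Div) (Q : X.Pt) :
    A ∈ X.GammaP Q ↔ ∃ f : X.FF, f ≠ 0 ∧ (∀ R, -(A R) ≤ X.ord R f) ∧ X.ord Q f = -(A Q) := by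
  have hQ : (A - X.pt Q) Q = A Q - 1 := by simp [pt]
  have hR : ∀ R, R ≠ Q → (A - X.pt Q) R = A R := fun R h => by
    simp [pt, Finsupp.single_eq_of_ne h]
  have hle : A - X.pt Q ≤ A := by
    intro R
    by_cases h : R = Q
    · subst h; omega
    · exact (hR R h).le
  constructor
  · intro h
    by_contra hcon
    push Not at hcon
    refine h (Set.Subset.antisymm ?_ (X.Lset_mono hle))
    intro f hf
    by_cases hf0 : f = 0
    · exact Or.inl hf0
    have hord := hf.resolve_left hf0
    refine Or.inr fun R => ?_
    by_cases h : R = Q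
    · subst h
      have h1 := hord R
      have h2 := hcon f hf0 hord
      omega
    · rw [hR R h]
      exact hord R
  · rintro ⟨f, hf0, hord, hfQ⟩ heq
    have hf : f ∈ X.Lset A := Or.inr hord
    rw [heq] at hf
    have := hf.resolve_left hf0 Q
    omega

/-- `Γ_Q` is stable under enlarging a divisor away from `Q`. -/
theorem mem_GammaP_of_le {A A' : X.Div} {Q : X.Pt} (hle : A ≤ A') (hQ : A' Q = A Q)
    (h : A ∈ X.GammaP Q) : A' ∈ X.GammaP Q := by
  rw [mem_GammaP_iff] at h ⊢
  obtain ⟨f, hf0, hord, hfQ⟩ := h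
  refine ⟨f, hf0, fun R => ?_, by rw [hfQ, hQ]⟩
  have h1 := hord R
  have h2 : A R ≤ A' R := hle R
  omega

theorem deg_nonneg_of_mem_GammaP {A : X.Div} {Q : X.Pt} (h : A ∈ X.GammaP Q) :
    0 ≤ X.deg A := by
  by_contra hneg
  have hpos := X.ptDeg_pos Q
  refine h ?_
  rw [X.Lset_eq_zero (D := A) (by omega), X.Lset_eq_zero]
  rw [X.deg_sub, X.deg_pt]
  omega

/-- The bound on `deg A` makes both `K - A` and `K - (A - Q)` of negative degree, where `K` is the
divisor of `ω`, so Riemann-Roch has no correction term at `A` or at `A - Q`. -/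
theorem mem_GammaP_of_deg {A : X.Div} {Q : X.Pt} {ω : X.W} (hω : ω ≠ 0)
    (h : X.deg (X.divω ω) + X.ptDeg Q < X.deg A) : A ∈ X.GammaP Q := by
  intro heq
  have hpos := X.ptDeg_pos Q
  have rr : ∀ D : X.Div, (X.l D : ℤ) - (X.l (X.divω ω - D) : ℤ) = X.deg D + 1 - X.g :=
    fun D => X.riemannRoch D ω hω
  have h1 := rr A
  have h2 := rr (A - X.pt Q)
  have hl : X.l A = X.l (A - X.pt Q) := by rw [l, l, Lsub, heq, ← Lsub]
  have hd := X.deg_sub A (X.pt Q)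
  rw [X.deg_pt] at hd
  rw [X.l_eq_zero (D := X.divω ω - A) (by rw [X.deg_sub]; omega)] at h1
  rw [X.l_eq_zero (D := X.divω ω - (A - X.pt Q)) (by rw [X.deg_sub]; omega)] at h2
  omega

end AGCurve

/-- Let `B` be a divisor and `P, Q` distinct rational points.
There is a unique integer `k(B,P,Q)` such that `B + k'P ∈ Γ_Q` iff
`k' ≥ k(B,P,Q)`; in particular `B + kP ∈ Γ_Q` implies `B + (k+1)P ∈ Γ_Q`. -/
theorem exists_unique_kBPQ (X : AGCurve) (B : X.Div) (P Q : X.Pt)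
    (hPrat : X.IsRational P) (hQrat : X.IsRational Q) (hPQ : P ≠ Q) :
    (∃! k0 : ℤ, ∀ k' : ℤ, B + k' • X.pt P ∈ X.GammaP Q ↔ k0 ≤ k') ∧
    (∀ k : ℤ, B + k • X.pt P ∈ X.GammaP Q → B + (k + 1) • X.pt P ∈ X.GammaP Q) := by
  have hmono : ∀ k k' : ℤ, k ≤ k' → B + k • X.pt P ∈ X.GammaP Q →
      B + k' • X.pt P ∈ X.GammaP Q := by
    intro k k' hk
    refine X.mem_GammaP_of_le (fun R => ?_) ?_
    · by_cases h : R = P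
      · subst h
        simpa [AGCurve.pt] using hk
      · simp [AGCurve.pt, Finsupp.single_eq_of_ne h]
    · simp [AGCurve.pt, Finsupp.single_eq_of_ne hPQ.symm]
  have hdeg : ∀ k : ℤ, X.deg (B + k • X.pt P) = X.deg B + k := by
    intro k
    rw [X.deg_add, X.deg_zsmul_pt, show X.ptDeg P = 1 from hPrat, mul_one]
  refine ⟨?_, fun k => hmono k (k + 1) (by omega)⟩
  obtain ⟨ω, hω⟩ := exists_ne (0 : X.W)
  obtain ⟨k0, hk0, hmin⟩ := Int.exists_least_of_bdd
    (P := fun k : ℤ => B + k • X.pt P ∈ X.GammaP Q)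
    ⟨-X.deg B, fun k hk => by
      have := X.deg_nonneg_of_mem_GammaP hk
      rw [hdeg] at this
      omega⟩
    ⟨X.deg (X.divω ω) + X.ptDeg Q + 1 - X.deg B, X.mem_GammaP_of_deg hω (by
      rw [hdeg]
      omega)⟩
  refine ⟨k0, fun k' => ⟨hmin k', fun h => hmono k0 k' h hk0⟩, fun k1 hk1 => ?_⟩
  exact le_antisymm ((hk1 k0).1 hk0) (hmin k1 ((hk1 k1).2 le_rfl))
end
end

section
/- Let P, Q be distinct rational points and let a, b be integers. Then d_{P,Q}(a) = a + b if and only if d_{Q,P}(b) = a + b. -/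
/-!
Put `A = a Q + b P`.  By the defining property of `k`, the equation `k(aQ, P, Q) = b` says
that `A ∈ Γ_Q` and `A - P ∉ Γ_Q`, and `k(bP, Q, P) = a` says that `A ∈ Γ_P` and `A - Q ∉ Γ_P`.
These two conditions are equivalent because `l(A) - l(A - P - Q)` can be computed by removing
`P` and `Q` in either order, each step dropping the dimension by at most one.

`AGCurve.gamma_swap` is one direction of the equivalence, proved with explicit functions: two
functions with the same order at a rational point `P` have a linear combination of higher order
at `P` (`AGCurve.exists_cancel`).
-/

open scoped Classical

noncomputable section

namespace AGCurve

variable (X : AGCurve)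

/-- The ultrametric inequality for `f + c h`, with a zero function having infinite order. -/
theorem ord_add_smul (P : X.Pt) (n : ℤ) (f h : X.FF) (c : X.F)
    (hf : f = 0 ∨ n ≤ X.ord P f) (hh : h = 0 ∨ n ≤ X.ord P h) :
    f + c • h = 0 ∨ n ≤ X.ord P (f + c • h) := by
  by_cases hc : c = 0
  · simpa [hc] using hf
  by_cases h0 : h = 0
  · simpa [h0] using hf
  have hcF : algebraMap X.F X.FF c ≠ 0 := by simpa using hc
  have hch : c • h ≠ 0 := smul_ne_zero hc h0
  have hord : X.ord P (c • h) = X.ord P h := by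
    rw [Algebra.smul_def, X.ord_mul P _ _ hcF h0, X.ord_algebraMap P c hc, zero_add]
  have hn : n ≤ X.ord P h := hh.resolve_left h0
  by_cases f0 : f = 0
  · right
    rw [f0, zero_add, hord]
    exact hn
  by_cases hs : f + c • h = 0
  · exact Or.inl hs
  · right
    have := X.ord_add_min P f (c • h) f0 hch hs
    have hf' := hf.resolve_left f0
    rw [hord] at this
    exact (le_min hf' hn).trans this

theorem Lset_add_smul {D : X.Div} {f h : X.FF} (c : X.F)
    (hf : f ∈ X.Lset D) (hh : h ∈ X.Lset D) : f + c • h ∈ X.Lset D := by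
  by_cases hs : f + c • h = 0
  · exact Or.inl hs
  · exact Or.inr fun R => (X.ord_add_smul R _ f h c (hf.imp_right fun H => H R)
      (hh.imp_right fun H => H R)).resolve_left hs

/-- At a rational point, the leading term of `f` can be cancelled by a constant multiple of any
`h` of the same order: the residue field there is the base field. -/
theorem exists_cancel {P : X.Pt} (hP : X.IsRational P) {f h : X.FF} (f0 : f ≠ 0) (h0 : h ≠ 0)
    (he : X.ord P f = X.ord P h) :
    ∃ c : X.F, f + c • h = 0 ∨ X.ord P h < X.ord P (f + c • h) := by
  have hu0 : f / h ≠ 0 := div_ne_zero f0 h0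
  have huh : f / h * h = f := div_mul_cancel₀ f h0
  have hu : X.ord P (f / h) = 0 := by
    have := X.ord_mul P (f / h) h hu0 h0
    rw [huh] at this
    omega
  have ho1 : X.ord P 1 = 0 := by
    simpa using X.ord_algebraMap P 1 one_ne_zero
  -- The axioms for `ev` give only `ev 1 ≠ 0` directly; hence the division by `ev 1` below.
  have he1 : X.ev P 1 ≠ 0 := by
    intro H
    have := (X.ev_eq_zero_iff P 1 hP one_ne_zero ho1.ge).1 H
    omega
  set c : X.F := -(X.ev P (f / h) / X.ev P 1) with hc
  refine ⟨c, ?_⟩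
  have hw : f + c • h = (f / h + c • (1 : X.FF)) * h := by
    rw [add_mul, huh, smul_mul_assoc, one_mul]
  by_cases w0 : f / h + c • (1 : X.FF) = 0
  · left
    rw [hw, w0, zero_mul]
  right
  have hwn : 0 ≤ X.ord P (f / h + c • (1 : X.FF)) :=
    (X.ord_add_smul P 0 (f / h) 1 c (Or.inr hu.ge) (Or.inr ho1.ge)).resolve_left w0
  have hc1 : 0 ≤ X.ord P (c • (1 : X.FF)) ∨ c • (1 : X.FF) = 0 := by
    have := X.ord_add_smul P 0 0 1 c (Or.inl rfl) (Or.inr ho1.ge)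
    rw [zero_add] at this
    exact this.symm
  have hev : X.ev P (f / h + c • (1 : X.FF)) = 0 := by
    rw [X.ev_add P _ _ (Or.inl hu.ge) hc1, X.ev_smul P c 1 (Or.inl ho1.ge), hc]
    field_simp
    ring
  have hpos := (X.ev_eq_zero_iff P _ hP w0 hwn).1 hev
  rw [hw, X.ord_mul P _ _ w0 h0]
  omega

theorem Lset_sub_pt_subset (D : X.Div) (P : X.Pt) : X.Lset (D - X.pt P) ⊆ X.Lset D := by
  apply X.Lset_mono
  intro R
  by_cases h : R = P <;> simp [pt, h]

/-- An element of `L(D)` lies in `L(D - P)` if it is zero or its order at `P` exceeds the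
minimum allowed by `D`. -/
theorem mem_Lset_sub_pt {D : X.Div} {P : X.Pt} {f : X.FF} (hf : f ∈ X.Lset D)
    (h : f = 0 ∨ -(D P) < X.ord P f) : f ∈ X.Lset (D - X.pt P) := by
  rcases h with h | h
  · exact Or.inl h
  rcases hf with hf | hf
  · exact Or.inl hf
  refine Or.inr fun R => ?_
  by_cases hR : P = R
  · subst hR
    simp only [pt, Finsupp.sub_apply, Finsupp.single_eq_same]
    omega
  · simpa [pt, Finsupp.single_apply, hR] using hf R

/-- An element of `L(D)` outside `L(D - P)` is nonzero and has order exactly `-D(P)` at `P`. -/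
theorem ord_eq_of_notMem {D : X.Div} {P : X.Pt} {f : X.FF} (hf : f ∈ X.Lset D)
    (h : f ∉ X.Lset (D - X.pt P)) : f ≠ 0 ∧ X.ord P f = -(D P) := by
  have f0 : f ≠ 0 := fun H => h (Or.inl H)
  refine ⟨f0, le_antisymm ?_ ((hf.resolve_left f0) P)⟩
  by_contra! H
  exact h (X.mem_Lset_sub_pt hf (Or.inr H))

/-- If `A ∈ Γ_Q` and `A - P ∉ Γ_Q` then `A ∈ Γ_P` and `A - Q ∉ Γ_P`. -/
theorem gamma_swap {P Q : X.Pt} (hP : X.IsRational P) (hPQ : P ≠ Q) {A : X.Div}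
    (h1 : A ∈ X.GammaP Q) (h2 : A - X.pt P ∉ X.GammaP Q) :
    A ∈ X.GammaP P ∧ A - X.pt Q ∉ X.GammaP P := by
  have h2' : X.Lset (A - X.pt P) = X.Lset (A - X.pt P - X.pt Q) := by
    simpa [GammaP] using h2
  have hcomm : A - X.pt P - X.pt Q = A - X.pt Q - X.pt P := sub_right_comm _ _ _
  have hsub : X.Lset (A - X.pt P) ⊆ X.Lset (A - X.pt Q) := by
    rw [h2', hcomm]
    exact X.Lset_sub_pt_subset _ _
  obtain ⟨f, hfA, hfQ⟩ : ∃ f ∈ X.Lset A, f ∉ X.Lset (A - X.pt Q) := by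
    by_contra! H
    exact h1 (Set.Subset.antisymm H (X.Lset_sub_pt_subset A Q))
  have hfP : f ∉ X.Lset (A - X.pt P) := fun H => hfQ (hsub H)
  refine ⟨fun H => hfP (H ▸ hfA), fun hne => hne ?_⟩
  refine Set.Subset.antisymm (fun h hh => ?_) (X.Lset_sub_pt_subset _ _)
  by_contra hhP
  obtain ⟨f0, hfo⟩ := X.ord_eq_of_notMem hfA hfP
  obtain ⟨h0, hho⟩ := X.ord_eq_of_notMem hh hhP
  have hAP : (A - X.pt Q) P = A P := by simp [pt, hPQ.symm]
  rw [hAP] at hho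
  obtain ⟨c, hc⟩ := X.exists_cancel hP f0 h0 (hfo.trans hho.symm)
  rw [hho] at hc
  -- `f + c h` lies in `L(A - P) ⊆ L(A - Q)`, and so does `h`; hence so would `f`.
  have hmem : f + c • h ∈ X.Lset (A - X.pt Q) :=
    hsub (X.mem_Lset_sub_pt (X.Lset_add_smul c hfA (X.Lset_sub_pt_subset A Q hh)) hc)
  have := X.Lset_add_smul (-c) hmem hh
  rw [neg_smul, add_neg_cancel_right] at this
  exact hfQ this

end AGCurve

/-- Let `P, Q` be distinct rational points and `a, b` integers.
Then `d_{P,Q}(a) = a + b` iff `d_{Q,P}(b) = a + b`, where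
`d_{P,Q}(a) = k(aQ, P, Q) + a`. -/
theorem dPQ_symm (X : AGCurve) (P Q : X.Pt)
    (hPrat : X.IsRational P) (hQrat : X.IsRational Q) (hPQ : P ≠ Q)
    (kPQ kQP : ℤ → ℤ)
    (hkPQ : ∀ a k' : ℤ, a • X.pt Q + k' • X.pt P ∈ X.GammaP Q ↔ kPQ a ≤ k')
    (hkQP : ∀ b k' : ℤ, b • X.pt P + k' • X.pt Q ∈ X.GammaP P ↔ kQP b ≤ k')
    (a b : ℤ) :
    kPQ a + a = a + b ↔ kQP b + b = a + b := by
  have e1 : kPQ a = b ↔ a • X.pt Q + b • X.pt P ∈ X.GammaP Q ∧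
      a • X.pt Q + b • X.pt P - X.pt P ∉ X.GammaP Q := by
    have hs : a • X.pt Q + b • X.pt P - X.pt P = a • X.pt Q + (b - 1) • X.pt P := by
      rw [sub_smul, one_smul, add_sub_assoc]
    rw [hs, hkPQ, hkPQ]
    omega
  have e2 : kQP b = a ↔ a • X.pt Q + b • X.pt P ∈ X.GammaP P ∧
      a • X.pt Q + b • X.pt P - X.pt Q ∉ X.GammaP P := by
    have hs : b • X.pt P + a • X.pt Q - X.pt Q = b • X.pt P + (a - 1) • X.pt Q := by
      rw [sub_smul, one_smul, add_sub_assoc]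
    rw [add_comm (a • X.pt Q), hs, hkQP, hkQP]
    omega
  have key : kPQ a = b ↔ kQP b = a := by
    rw [e1, e2]
    exact ⟨fun h => X.gamma_swap hPrat hPQ h.1 h.2,
      fun h => X.gamma_swap hQrat hPQ.symm h.1 h.2⟩
  constructor
  · intro h
    have := key.1 (by omega)
    omega
  · intro h
    have := key.2 (by omega)
    omega
end
end

section
/- Let q_0 ≥ 1 be an integer and m = 2q_0^2 + 2q_0 + 1. For every integer k there exist unique integers a, b with |a| + |b| ≤ q_0 such that k ≡ a(q_0+1) + b q_0 − q_0(q_0+1) (mod m); equivalently, the map (a,b) ↦ a(q_0+1) + b q_0 mod m is a bijection from {(a,b) ∈ ℤ² : |a| + |b| ≤ q_0} onto ℤ/mℤ. -/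
/-!
Put `u = a + b` and `v = a - b`.  The condition `|a| + |b| ≤ q₀` says `|u| ≤ q₀` and `|v| ≤ q₀`,
and `N = a(q₀+1) + b q₀` satisfies `2N = u(2q₀+1) + v`.  Thus `(u, v)` is the quotient and the
balanced remainder of `2N` on division by `2q₀+1`, so `N` determines `(a, b)`
(`suzuki_value_injective`).  Moreover `|2N| ≤ q₀(2q₀+2) = m - 1`, and conversely every integer `N`
in this range arises (`suzuki_value_surjective`): the bound on `N` forces `|u| ≤ q₀`, and `u`, `v`
have the same parity because `2q₀+1` is odd.  Since `|2N| ≤ m - 1` describes a complete system of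
residues modulo `m`, the theorem follows.
-/

lemma abs_add_abs_le_iff_sum_diff (a b q : ℤ) :
    |a| + |b| ≤ q ↔ (-q ≤ a + b ∧ a + b ≤ q) ∧ (-q ≤ a - b ∧ a - b ≤ q) := by
  constructor
  · intro h
    have := abs_le.mp (le_refl |a|)
    have := abs_le.mp (le_refl |b|)
    omega
  · intro h
    rcases abs_cases a with ha | ha <;> rcases abs_cases b with hb | hb <;> omega

/-- A multiple of `d` lying strictly between `-d` and `d` comes from the factor `0`. -/
lemma eq_zero_of_mul_lt {d t : ℤ} (h1 : -d < d * t) (h2 : d * t < d) : t = 0 := by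
  have hd : 0 < d := by omega
  have h3 : -1 < t := by nlinarith
  have h4 : t < 1 := by nlinarith
  omega

lemma suzuki_value_bound {q a b : ℤ} (hq : 1 ≤ q) (h : |a| + |b| ≤ q) :
    -(q ^ 2 + q) ≤ a * (q + 1) + b * q ∧ a * (q + 1) + b * q ≤ q ^ 2 + q := by
  obtain ⟨⟨h1, h2⟩, h3, h4⟩ := (abs_add_abs_le_iff_sum_diff a b q).mp h
  constructor <;> nlinarith

lemma suzuki_value_injective {q a b c d : ℤ} (h : |a| + |b| ≤ q) (h' : |c| + |d| ≤ q)
    (he : a * (q + 1) + b * q = c * (q + 1) + d * q) : a = c ∧ b = d := by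
  obtain ⟨-, h3, h4⟩ := (abs_add_abs_le_iff_sum_diff a b q).mp h
  obtain ⟨-, h3', h4'⟩ := (abs_add_abs_le_iff_sum_diff c d q).mp h'
  have key : (2 * q + 1) * ((a + b) - (c + d)) = (c - d) - (a - b) := by linarith
  have hu : (a + b) - (c + d) = 0 := eq_zero_of_mul_lt (d := 2 * q + 1) (by omega) (by omega)
  rw [hu] at key
  omega

lemma suzuki_value_surjective {q N : ℤ} (hq : 1 ≤ q) (h1 : -(q ^ 2 + q) ≤ N)
    (h2 : N ≤ q ^ 2 + q) : ∃ a b : ℤ, |a| + |b| ≤ q ∧ a * (q + 1) + b * q = N := by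
  -- `u` is the integer nearest to `2N / (2q+1)`, with balanced remainder `2N - u(2q+1)`
  obtain ⟨u, hu⟩ : ∃ u, u = (2 * N + q) / (2 * q + 1) := ⟨_, rfl⟩
  have hdiv := Int.mul_ediv_add_emod (2 * N + q) (2 * q + 1)
  have hr0 := Int.emod_nonneg (2 * N + q) (show 2 * q + 1 ≠ 0 by omega)
  have hr1 := Int.emod_lt_of_pos (2 * N + q) (show 0 < 2 * q + 1 by omega)
  rw [← hu] at hdiv
  refine ⟨N - u * q, u - (N - u * q), ?_, by ring⟩
  rw [abs_add_abs_le_iff_sum_diff]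
  have hup : u < q + 1 := by
    by_contra hc
    nlinarith
  have hlo : -(q + 1) < u := by
    by_contra hc
    nlinarith
  refine ⟨⟨by linarith, by linarith⟩, by linarith, by linarith⟩

/-- Let `q₀ ≥ 1` be an integer and `m = 2q₀² + 2q₀ + 1`.  For
every integer `k` there exist unique integers `a, b` with `|a| + |b| ≤ q₀` such
that `k ≡ a(q₀+1) + b·q₀ - q₀(q₀+1) (mod m)`; equivalently, the map
`(a,b) ↦ a(q₀+1) + b·q₀ mod m` is a bijection from
`{(a,b) ∈ ℤ² : |a| + |b| ≤ q₀}` onto `ℤ/mℤ`. -/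
theorem suzuki_residue_representation (q0 : ℤ) (hq0 : 1 ≤ q0) (m : ℤ)
    (hm : m = 2 * q0 ^ 2 + 2 * q0 + 1) (k : ℤ) :
    ∃! ab : ℤ × ℤ, |ab.1| + |ab.2| ≤ q0 ∧
      k ≡ ab.1 * (q0 + 1) + ab.2 * q0 - q0 * (q0 + 1) [ZMOD m] := by
  have hmpos : 0 < m := by nlinarith
  -- `(k + 2(q₀² + q₀)) % m - (q₀² + q₀)` is the balanced residue of `k + q₀(q₀+1)` modulo `m`
  have hr0 := Int.emod_nonneg (k + 2 * (q0 ^ 2 + q0)) hmpos.ne'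
  have hr1 := Int.emod_lt_of_pos (k + 2 * (q0 ^ 2 + q0)) hmpos
  have hdiv := Int.mul_ediv_add_emod (k + 2 * (q0 ^ 2 + q0)) m
  obtain ⟨a, b, hab, hN⟩ := suzuki_value_surjective (q := q0)
    (N := (k + 2 * (q0 ^ 2 + q0)) % m - (q0 ^ 2 + q0)) hq0 (by linarith) (by linarith)
  have hk : k ≡ a * (q0 + 1) + b * q0 - q0 * (q0 + 1) [ZMOD m] := by
    rw [Int.modEq_iff_dvd]
    exact ⟨-((k + 2 * (q0 ^ 2 + q0)) / m), by linarith⟩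
  refine ⟨(a, b), ⟨hab, hk⟩, ?_⟩
  rintro ⟨c, d⟩ ⟨hcd, hk'⟩
  dsimp only at hcd hk'
  obtain ⟨t, ht⟩ := Int.modEq_iff_dvd.mp (hk.symm.trans hk')
  obtain ⟨h1, h2⟩ := suzuki_value_bound hq0 hab
  obtain ⟨h3, h4⟩ := suzuki_value_bound hq0 hcd
  have ht0 : t = 0 := eq_zero_of_mul_lt (d := m) (by linarith) (by linarith)
  rw [ht0] at ht
  obtain ⟨hac, hbd⟩ := suzuki_value_injective hcd hab (by linarith)
  rw [hac, hbd]
end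

section
/- Let q_0 ≥ 1 be an integer, q = 2q_0^2, and m = q + 2q_0 + 1. Let k be an integer and let a, b be the unique integers with |a| + |b| ≤ q_0 and k ≡ a(q_0+1) + b q_0 − q_0(q_0+1) (mod m). Set k' = (k−1) mod m, with 0 ≤ k' < m, and r = k' mod (2q_0+1). Then (q−1)·(2q_0 − ⌊k'/(2q_0+1)⌋ − ⌊r/(q_0+1)⌋ − (r mod (q_0+1))) = (q_0 − a)(q−1). -/
/-!
Put `s = a + b + q0` and `t = a - b + q0`. Both lie in `[0, 2 * q0]`, because `|a| + |b| ≤ q0`, and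
they have the same parity `v`; write `s = 2 * u + v` and `t = 2 * w + v`. Then `a = u + v + w - q0`,
`b = u - w`, and substituting gives
`a * (q0 + 1) + b * q0 - q0 * (q0 + 1) - 1 = u * (2 * q0 + 1) + v * (q0 + 1) + w - m`.
The bounds on `s` and `t` make `u`, `v`, `w` the digits of `k'`, that is, the three quotients and
remainders in the closed form, so that their sum `q0 + a` is the quantity to be subtracted from
`2 * q0`.
-/

/-- Digits `u`, `v`, `w` attached to `(a, b)`. The last two bounds say that `u` and `w` are at most
`q0 - 1` when `v = 1`. -/
lemma exists_digits (q0 a b : ℤ) (hab : |a| + |b| ≤ q0) :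
    ∃ u v w : ℤ, a = u + v + w - q0 ∧ b = u - w ∧ 0 ≤ u ∧ 0 ≤ w ∧ 0 ≤ v ∧ v ≤ 1 ∧
      u + v ≤ q0 ∧ w + v ≤ q0 := by
  have h1 := le_abs_self a
  have h2 := neg_abs_le a
  have h3 := le_abs_self b
  have h4 := neg_abs_le b
  refine ⟨(a + b + q0) / 2, (a + b + q0) % 2, (a - b + q0) / 2, ?_, ?_, ?_, ?_, ?_, ?_, ?_, ?_⟩ <;>
    omega

lemma ediv_emod_of_digits {x n d e : ℤ} (hx : x = d * n + e) (he : 0 ≤ e) (hen : e < n) :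
    x.ediv n = d ∧ x.emod n = e :=
  (Int.ediv_emod_unique (by omega)).2 ⟨by rw [hx]; ring, he, hen⟩

/-- Let `q₀ ≥ 1`, `q = 2q₀²`, `m = q + 2q₀ + 1`.  Let `k` be an
integer and `a, b` the unique integers with `|a| + |b| ≤ q₀` and
`k ≡ a(q₀+1) + b·q₀ - q₀(q₀+1) (mod m)`.  Set `k' = (k-1) mod m` (with
`0 ≤ k' < m`) and `r = k' mod (2q₀+1)`.  Then
`(q-1)·(2q₀ - ⌊k'/(2q₀+1)⌋ - ⌊r/(q₀+1)⌋ - (r mod (q₀+1))) = (q₀ - a)(q-1)`. -/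
theorem suzuki_d_function_closed_form (q0 q m : ℤ) (hq0 : 1 ≤ q0)
    (hq : q = 2 * q0 ^ 2) (hm : m = q + 2 * q0 + 1)
    (k a b : ℤ) (hab : |a| + |b| ≤ q0)
    (hk : k ≡ a * (q0 + 1) + b * q0 - q0 * (q0 + 1) [ZMOD m])
    (k' r : ℤ) (hk' : k' = (k - 1).emod m) (hr : r = k'.emod (2 * q0 + 1)) :
    (q - 1) * (2 * q0 - k'.ediv (2 * q0 + 1) - r.ediv (q0 + 1) - r.emod (q0 + 1)) =
      (q0 - a) * (q - 1) := by
  obtain ⟨u, v, w, ha, hb, hu, hw, hv0, hv1, huv, hwv⟩ := exists_digits q0 a b hab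
  subst hr
  have hv : v = 0 ∨ v = 1 := by omega
  have hr0 : 0 ≤ v * (q0 + 1) + w := by positivity
  have hrN : v * (q0 + 1) + w < 2 * q0 + 1 := by
    rcases hv with rfl | rfl <;> omega
  have hk'eq : k' = u * (2 * q0 + 1) + (v * (q0 + 1) + w) := by
    obtain ⟨c, hc⟩ := hk.symm.dvd
    rw [hk']
    refine (ediv_emod_of_digits (d := c - 1) ?_ (by positivity) ?_).2
    · subst ha hb hm hq
      linear_combination hc
    · -- `m = q0 * (2 * q0 + 1) + (q0 + 1)`, and `u = q0` forces `v = 0`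
      rw [hm, hq]
      rcases (show u = q0 ∨ u ≤ q0 - 1 by omega) with rfl | h
      · obtain rfl : v = 0 := by omega
        nlinarith
      · nlinarith [mul_le_mul_of_nonneg_right h (show 0 ≤ 2 * q0 + 1 by omega)]
  obtain ⟨h1, h2⟩ := ediv_emod_of_digits hk'eq hr0 hrN
  obtain ⟨h3, h4⟩ := ediv_emod_of_digits (n := q0 + 1) (rfl : v * (q0 + 1) + w = _) hw (by omega)
  rw [h1, h2, h3, h4, ha]
  ring
end
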